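/- Let μ and ν be positive Borel measures on (0,+∞), with ν σ-finite, and let ψ : (0,+∞) → [0,∞) be a density of the absolutely continuous part of ν with respect to Lebesgue measure. Let 1 < p < ∞ with p' = p/(p−1). Then there is a finite constant C ≥ 0 such that ∫_0^{+∞} (∫_{(s,+∞)} f(t) dt)^p dμ(s) ≤ C^p ∫_0^{+∞} f(x)^p dν(x) for every Borel measurable f : (0,+∞) → [0,+∞] if and only if B := sup_{s>0} μ((0,s])^{1/p} (∫_{(s,+∞)} ψ(x)^{−p'/p} dx)^{1/p'} is finite; moreover the minimal such C satisfies B ≤ C ≤ (p')^{1/p'} p^{1/p} B. -/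

import Mathlib

open MeasureTheory ENNReal
open scoped NNReal

/-!
The argument only uses a measure `ρ` and a real-valued level function `N`, the Hardy operator being
`f ↦ (s ↦ ∫_{N > s} f dρ)`; on the half-line `ρ` is Lebesgue measure and `N` is the identity.

Write `V x = ∫_{N ≥ N x} ψ^(-q/p) dρ`. Testing the inequality on functions `h ≤ ψ^(-q/p)` supported
in `{N > s}`, for which `ψ * h^p ≤ h`, shows that `B ≤ C`; the singular part of `ν` is invisible,
since it lives on a `ρ`-null set.

Conversely, Hölder's inequality with weight `ψ * V^(1/q)` followed by Tonelli's theorem leaves two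
integrals of the form `∫ m {y | N y ≤ N x}^(-a) dm(x)` with `0 < a < 1`: one for the measure
`ψ^(-q/p) dρ` and the level function `-N`, one for `μ` and the identity. Each is at most
`m(X)^(1-a) / (1-a)`, even when `m` has atoms, because `F x = m {y | N y ≤ N x}` satisfies
`m {F < r} ≤ r`, so that `F` under `m` stochastically dominates the identity on `(0, m(X)]` under
Lebesgue measure.
-/

open Set

lemma mul_rpow_le_of_forall_lt {a b c : ℝ≥0∞} {r : ℝ} (hr : 0 < r)
    (h : ∀ x < b, a * x ^ r ≤ c) : a * b ^ r ≤ c := by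
  refine ENNReal.mul_le_of_forall_lt fun a' ha' y hy ↦ ?_
  have hy' : y ^ r⁻¹ < b := by rwa [ENNReal.rpow_inv_lt_iff hr]
  calc a' * y ≤ a * (y ^ r⁻¹) ^ r := by rw [ENNReal.rpow_inv_rpow hr.ne']; gcongr
    _ ≤ c := h _ hy'

lemma rpow_eq_self_mul_rpow_sub_one {p : ℝ} (hp : 1 ≤ p) (x : ℝ≥0∞) :
    x ^ p = x * x ^ (p - 1) := by
  have := ENNReal.rpow_add_of_nonneg (x := x) 1 (p - 1) zero_le_one (sub_nonneg.2 hp)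
  rwa [add_sub_cancel, ENNReal.rpow_one] at this

section DualWeight

variable {X : Type*} {ψ : X → ℝ≥0} {p q : ℝ}

/-- The weight `ψ ^ (-q / p)`, which is dual to `ψ` in Hölder's inequality. It takes the
value `⊤` where `ψ` vanishes. -/
noncomputable def dualWeight (ψ : X → ℝ≥0) (p q : ℝ) (x : X) : ℝ≥0∞ :=
  (ψ x : ℝ≥0∞) ^ (-(q / p))

lemma measurable_dualWeight [MeasurableSpace X] (hψ : Measurable ψ) :
    Measurable (dualWeight ψ p q) := by
  unfold dualWeight; fun_prop

lemma dualWeight_ne_zero (hpq : p.HolderConjugate q) (x : X) : dualWeight ψ p q x ≠ 0 := by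
  have : 0 ≤ q / p := div_nonneg hpq.symm.nonneg hpq.nonneg
  simp [dualWeight, ENNReal.rpow_eq_zero_iff, this.not_gt]

lemma dualWeight_eq_top (hpq : p.HolderConjugate q) {x : X} (hx : ψ x = 0) :
    dualWeight ψ p q x = ⊤ := by
  have : 0 < q / p := div_pos hpq.symm.pos hpq.pos
  simp [dualWeight, hx, this]

lemma mul_rpow_le_self_of_le_dualWeight (hpq : p.HolderConjugate q) {x : X} {y : ℝ≥0∞}
    (hy : y ≤ dualWeight ψ p q x) : (ψ x : ℝ≥0∞) * y ^ p ≤ y := by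
  rcases eq_or_ne (ψ x) 0 with hψx | hψx
  · simp [hψx]
  have hexp : -(q / p) * (p - 1) = -1 := by
    rw [neg_mul, div_mul_eq_mul_div, mul_comm, hpq.sub_one_mul_conj, div_self hpq.ne_zero]
  calc (ψ x : ℝ≥0∞) * y ^ p = y * (ψ x * y ^ (p - 1)) := by
        rw [rpow_eq_self_mul_rpow_sub_one hpq.lt.le, mul_left_comm]
    _ ≤ y * (ψ x * dualWeight ψ p q x ^ (p - 1)) := by
        gcongr; exact hpq.sub_one_pos.le
    _ = y := by
        rw [dualWeight, ← ENNReal.rpow_mul, hexp, ENNReal.rpow_neg_one,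
          ENNReal.mul_inv_cancel (by simpa using hψx) (by simp), mul_one]

end DualWeight

variable {X : Type*} [MeasurableSpace X]

lemma exists_measurable_le_lt_lintegral_lt_top {ρ : Measure X} [SigmaFinite ρ] {w : X → ℝ≥0∞}
    {L : ℝ≥0∞} (hL : L < ∫⁻ x, w x ∂ρ) :
    ∃ h : X → ℝ≥0∞, Measurable h ∧ (∀ x, h x ≤ w x) ∧ L < ∫⁻ x, h x ∂ρ ∧ ∫⁻ x, h x ∂ρ < ⊤ := by
  simp_rw [lintegral_eq_nnreal, lt_iSup_iff] at hL
  obtain ⟨φ, hφw, hLφ⟩ := hL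
  rw [← SimpleFunc.lintegral_eq_lintegral] at hLφ
  obtain ⟨g, hgφ, hg_top, hLg⟩ := SimpleFunc.exists_lt_lintegral_simpleFunc_of_lt_lintegral hLφ
  exact ⟨fun x ↦ g x, g.measurable.coe_nnreal_ennreal,
    fun x ↦ (ENNReal.coe_le_coe.2 (hgφ x)).trans (hφw x), hLg, hg_top⟩

lemma ae_ne_zero_of_measure_lt_le {m : Measure X} {F : X → ℝ≥0∞}
    (h : ∀ r, m {x | F x < r} ≤ r) : ∀ᵐ x ∂m, F x ≠ 0 := by
  refine le_antisymm (le_of_forall_gt fun r hr ↦ ?_) zero_le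
  obtain ⟨r', hr', hrr'⟩ := exists_between hr
  refine lt_of_le_of_lt (measure_mono fun x hx ↦ ?_) ((h r').trans_lt hrr')
  have hFx : F x = 0 := by simpa using hx
  exact hFx.trans_lt hr'

lemma lintegral_Ioc_ofReal_rpow_neg {a T : ℝ} (ha : a < 1) (hT : 0 ≤ T) :
    ∫⁻ r in Ioc 0 T, ENNReal.ofReal (r ^ (-a)) = ENNReal.ofReal ((1 - a)⁻¹ * T ^ (1 - a)) := by
  have hint : IntegrableOn (fun r : ℝ ↦ r ^ (-a)) (Ioc 0 T) :=
    (intervalIntegrable_iff_integrableOn_Ioc_of_le hT).1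
      (intervalIntegral.intervalIntegrable_rpow' (by linarith))
  rw [← ofReal_integral_eq_lintegral_ofReal hint, ← intervalIntegral.integral_of_le hT,
    integral_rpow (.inl (by linarith)), neg_add_eq_sub, Real.zero_rpow (by linarith), sub_zero,
    div_eq_inv_mul]
  filter_upwards [ae_restrict_mem measurableSet_Ioc] with r hr
  exact Real.rpow_nonneg hr.1.le _

lemma min_le_volume_Ioc_inter_lt_rpow_neg {a t T : ℝ} (ha : 0 < a) (ht : 0 < t) :
    min (ENNReal.ofReal T) (ENNReal.ofReal (t ^ (-a)⁻¹)) ≤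
      volume.restrict (Ioc 0 T) {r | t < r ^ (-a)} := by
  have hsub : Ioo 0 (min T (t ^ (-a)⁻¹)) ⊆ {r | t < r ^ (-a)} ∩ Ioc 0 T := fun r hr ↦
    ⟨(Real.lt_rpow_inv_iff_of_neg hr.1 ht (neg_lt_zero.2 ha)).1 (hr.2.trans_le (min_le_right _ _)),
      hr.1, (hr.2.trans_le (min_le_left _ _)).le⟩
  calc min (ENNReal.ofReal T) (ENNReal.ofReal (t ^ (-a)⁻¹))
      = volume (Ioo 0 (min T (t ^ (-a)⁻¹))) := by
        rw [Real.volume_Ioo, sub_zero, ENNReal.ofReal_min]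
    _ ≤ volume.restrict (Ioc 0 T) {r | t < r ^ (-a)} :=
        (measure_mono hsub).trans (Measure.le_restrict_apply _ _)

lemma measure_lt_toReal_rpow_neg_le {m : Measure X} {F : X → ℝ≥0∞}
    (h : ∀ r, m {x | F x < r} ≤ r) {a t : ℝ} (ha : 0 < a) (ht : 0 < t) :
    m {x | t < (F x).toReal ^ (-a)} ≤ ENNReal.ofReal (t ^ (-a)⁻¹) := by
  refine (measure_mono fun x (hx : t < (F x).toReal ^ (-a)) ↦ ?_).trans (h _)
  have hFx : (F x).toReal ≠ 0 := fun h0 ↦ by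
    rw [h0, Real.zero_rpow (neg_ne_zero.2 ha.ne')] at hx
    exact hx.not_gt ht
  have hFx_top : F x ≠ ⊤ := fun htop ↦ hFx (by simp [htop])
  exact (ENNReal.lt_ofReal_iff_toReal_lt hFx_top).2 <|
    (Real.lt_rpow_inv_iff_of_neg (hFx.symm.lt_of_le toReal_nonneg) ht (neg_lt_zero.2 ha)).2 hx

lemma lintegral_rpow_neg_le_of_measure_lt_le {m : Measure X} {F : X → ℝ≥0∞} (hF : Measurable F)
    (h : ∀ r, m {x | F x < r} ≤ r) {a : ℝ} (ha₀ : 0 < a) (ha₁ : a < 1) :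
    ∫⁻ x, F x ^ (-a) ∂m ≤ ENNReal.ofReal (1 - a)⁻¹ * m univ ^ (1 - a) := by
  have ha₁' : 0 < 1 - a := sub_pos.2 ha₁
  rcases eq_or_ne (m univ) ⊤ with hm | hm
  · simp [hm, ha₁]
  obtain ⟨T, hT, hmT⟩ : ∃ T : ℝ, 0 ≤ T ∧ m univ = ENNReal.ofReal T :=
    ⟨_, toReal_nonneg, (ofReal_toReal hm).symm⟩
  have h_ofReal : ∀ᵐ x ∂m, F x ^ (-a) = ENNReal.ofReal ((F x).toReal ^ (-a)) := by
    filter_upwards [ae_ne_zero_of_measure_lt_le h] with x hx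
    rw [ENNReal.toReal_rpow, ofReal_toReal]
    simp [ENNReal.rpow_eq_top_iff, hx, ha₀.le]
  calc ∫⁻ x, F x ^ (-a) ∂m = ∫⁻ x, ENNReal.ofReal ((F x).toReal ^ (-a)) ∂m :=
        lintegral_congr_ae h_ofReal
    _ = ∫⁻ t in Ioi 0, m {x | t < (F x).toReal ^ (-a)} :=
        lintegral_eq_lintegral_meas_lt m (.of_forall fun x ↦ by positivity) (by fun_prop)
    _ ≤ ∫⁻ t in Ioi 0, volume.restrict (Ioc 0 T) {r : ℝ | t < r ^ (-a)} := by
        refine setLIntegral_mono' measurableSet_Ioi fun t ht ↦ ?_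
        refine (le_min ?_ ?_).trans (min_le_volume_Ioc_inter_lt_rpow_neg ha₀ ht)
        · exact (measure_mono (subset_univ _)).trans_eq hmT
        · exact measure_lt_toReal_rpow_neg_le h ha₀ ht
    _ = ∫⁻ r in Ioc 0 T, ENNReal.ofReal (r ^ (-a)) := by
        refine (lintegral_eq_lintegral_meas_lt _ ?_ (by fun_prop)).symm
        filter_upwards [ae_restrict_mem measurableSet_Ioc] with r hr
        exact Real.rpow_nonneg hr.1.le _
    _ = ENNReal.ofReal (1 - a)⁻¹ * m univ ^ (1 - a) := by
        rw [lintegral_Ioc_ofReal_rpow_neg ha₁ hT, ENNReal.ofReal_mul (by positivity), hmT,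
          ENNReal.ofReal_rpow_of_nonneg hT ha₁'.le]

section Sublevel

variable {N : X → ℝ}

lemma measurable_measure_preimage_Iic (hN : Measurable N) (m : Measure X) :
    Measurable fun x ↦ m (N ⁻¹' Iic (N x)) :=
  (Monotone.measurable (f := fun s ↦ m (N ⁻¹' Iic s)) fun _ _ hst ↦
    measure_mono (preimage_mono (Iic_subset_Iic.2 hst))).comp hN

lemma measure_setOf_measure_Iic_lt_le (m : Measure ℝ) [IsFiniteMeasure m] (r : ℝ≥0∞) :
    m {s | m (Iic s) < r} ≤ r := by
  have hmeas : MeasurableSet {s | m (Iic s) < r} :=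
    measurableSet_lt (measurable_measure_preimage_Iic measurable_id m) measurable_const
  rw [hmeas.measure_eq_iSup_isCompact_of_ne_top (measure_ne_top _ _)]
  refine iSup₂_le fun K hK ↦ iSup_le fun hKc ↦ ?_
  rcases K.eq_empty_or_nonempty with rfl | hne
  · simp
  obtain ⟨k, hkK, hk⟩ := hKc.exists_isGreatest hne
  exact (measure_mono hk).trans (hK hkK).le

lemma measure_setOf_measure_preimage_Iic_lt_le (hN : Measurable N) (m : Measure X)
    [IsFiniteMeasure m] (r : ℝ≥0∞) : m {x | m (N ⁻¹' Iic (N x)) < r} ≤ r := by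
  have hpush := measure_setOf_measure_Iic_lt_le (m.map N) r
  simp_rw [Measure.map_apply hN measurableSet_Iic] at hpush
  exact (Measure.le_map_apply hN.aemeasurable _).trans hpush

lemma ae_measure_preimage_Iic_ne_zero (hN : Measurable N) (m : Measure X) [IsFiniteMeasure m] :
    ∀ᵐ x ∂m, m (N ⁻¹' Iic (N x)) ≠ 0 :=
  ae_ne_zero_of_measure_lt_le (measure_setOf_measure_preimage_Iic_lt_le hN m)

lemma lintegral_measure_preimage_Iic_rpow_neg_le (hN : Measurable N) (m : Measure X) {a : ℝ}
    (ha₀ : 0 < a) (ha₁ : a < 1) :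
    ∫⁻ x, m (N ⁻¹' Iic (N x)) ^ (-a) ∂m ≤ ENNReal.ofReal (1 - a)⁻¹ * m univ ^ (1 - a) := by
  rcases eq_or_ne (m univ) ⊤ with hm | hm
  · simp [hm, ha₁]
  have : IsFiniteMeasure m := ⟨hm.lt_top⟩
  exact lintegral_rpow_neg_le_of_measure_lt_le (measurable_measure_preimage_Iic hN m)
    (measure_setOf_measure_preimage_Iic_lt_le hN m) ha₀ ha₁

lemma lintegral_Iio_measure_Iic_rpow_neg_le (μ : Measure ℝ) (t : ℝ) {a : ℝ} (ha₀ : 0 < a)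
    (ha₁ : a < 1) :
    ∫⁻ s in Iio t, μ (Iic s) ^ (-a) ∂μ ≤ ENNReal.ofReal (1 - a)⁻¹ * μ (Iio t) ^ (1 - a) := by
  have := lintegral_measure_preimage_Iic_rpow_neg_le measurable_id (μ.restrict (Iio t)) ha₀ ha₁
  rw [Measure.restrict_apply_univ] at this
  refine (setLIntegral_congr_fun measurableSet_Iio fun s hs ↦ ?_).trans_le this
  rw [preimage_id, id, Measure.restrict_eq_self μ (Iic_subset_Iio.2 hs)]

end Sublevel

section Tail

variable {N : X → ℝ} {ρ : Measure X}

lemma withDensity_restrict_preimage_Ioi_apply (hN : Measurable N) (ρ : Measure X) (w : X → ℝ≥0∞)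
    {s : ℝ} {x : X} (hx : s < N x) :
    (ρ.restrict (N ⁻¹' Ioi s)).withDensity w ((-N) ⁻¹' Iic ((-N) x)) =
      ∫⁻ y in N ⁻¹' Ici (N x), w y ∂ρ := by
  have hset : (-N) ⁻¹' Iic ((-N) x) = N ⁻¹' Ici (N x) := by ext y; simp
  have hsub : N ⁻¹' Ici (N x) ⊆ N ⁻¹' Ioi s := preimage_mono (Ici_subset_Ioi.2 hx)
  rw [hset, withDensity_apply _ (hN measurableSet_Ici), Measure.restrict_restrict_of_subset hsub]

lemma measurable_lintegral_preimage_Ici (hN : Measurable N) (ρ : Measure X) (w : X → ℝ≥0∞) :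
    Measurable fun x ↦ ∫⁻ y in N ⁻¹' Ici (N x), w y ∂ρ :=
  (Antitone.measurable (f := fun s ↦ ∫⁻ y in N ⁻¹' Ici s, w y ∂ρ) fun _ _ hst ↦
    lintegral_mono_set (preimage_mono (Ici_subset_Ici.2 hst))).comp hN

lemma lintegral_mul_lintegral_preimage_Ici_rpow_neg_le (hN : Measurable N) (ρ : Measure X)
    {w : X → ℝ≥0∞} (hw : Measurable w) (s : ℝ) {a : ℝ} (ha₀ : 0 < a) (ha₁ : a < 1) :
    ∫⁻ x in N ⁻¹' Ioi s, w x * (∫⁻ y in N ⁻¹' Ici (N x), w y ∂ρ) ^ (-a) ∂ρ ≤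
      ENNReal.ofReal (1 - a)⁻¹ * (∫⁻ x in N ⁻¹' Ioi s, w x ∂ρ) ^ (1 - a) := by
  set m := (ρ.restrict (N ⁻¹' Ioi s)).withDensity w with hm
  have key := lintegral_measure_preimage_Iic_rpow_neg_le hN.neg m ha₀ ha₁
  rw [hm, withDensity_apply _ .univ, Measure.restrict_univ, ← hm,
    lintegral_withDensity_eq_lintegral_mul _ hw
      ((measurable_measure_preimage_Iic hN.neg m).pow_const _)] at key
  refine (setLIntegral_congr_fun (hN measurableSet_Ioi) fun x hx ↦ ?_).trans_le key
  rw [Pi.mul_apply, withDensity_restrict_preimage_Ioi_apply hN ρ w hx]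

lemma ae_lintegral_preimage_Ici_ne_zero (hN : Measurable N) {w : X → ℝ≥0∞} (hw : Measurable w)
    (hw₀ : ∀ x, w x ≠ 0) {s : ℝ} (hs : ∫⁻ x in N ⁻¹' Ioi s, w x ∂ρ ≠ ⊤) :
    ∀ᵐ x ∂ρ.restrict (N ⁻¹' Ioi s), ∫⁻ y in N ⁻¹' Ici (N x), w y ∂ρ ≠ 0 := by
  set m := (ρ.restrict (N ⁻¹' Ioi s)).withDensity w
  have : IsFiniteMeasure m := isFiniteMeasure_withDensity hs
  have hac : ρ.restrict (N ⁻¹' Ioi s) ≪ m :=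
    withDensity_absolutelyContinuous' hw.aemeasurable (.of_forall hw₀)
  filter_upwards [hac.ae_le (ae_measure_preimage_Iic_ne_zero hN.neg m),
    ae_restrict_mem (hN measurableSet_Ioi)] with x hx hsx
  rwa [withDensity_restrict_preimage_Ioi_apply hN ρ w hsx] at hx

lemma lintegral_mul_setLIntegral_preimage_Ioi [SFinite ρ] {μ : Measure ℝ} [SFinite μ]
    (hN : Measurable N) {u : ℝ → ℝ≥0∞} (hu : Measurable u) {g : X → ℝ≥0∞} (hg : Measurable g) :
    ∫⁻ s, u s * ∫⁻ x in N ⁻¹' Ioi s, g x ∂ρ ∂μ = ∫⁻ x, g x * ∫⁻ s in Iio (N x), u s ∂μ ∂ρ := by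
  let k : ℝ → X → ℝ≥0∞ := fun s x ↦ {z : ℝ × X | z.1 < N z.2}.indicator
    (fun z ↦ u z.1 * g z.2) (s, x)
  have hk : Measurable (Function.uncurry k) :=
    Measurable.indicator (by fun_prop) (measurableSet_lt (by fun_prop) (by fun_prop))
  have hk_left (s : ℝ) : ∫⁻ x, k s x ∂ρ = u s * ∫⁻ x in N ⁻¹' Ioi s, g x ∂ρ := by
    rw [← lintegral_const_mul _ hg, ← lintegral_indicator (hN measurableSet_Ioi)]
    rfl
  have hk_right (x : X) : ∫⁻ s, k s x ∂μ = g x * ∫⁻ s in Iio (N x), u s ∂μ := by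
    rw [mul_comm, ← lintegral_mul_const _ hu, ← lintegral_indicator measurableSet_Iio]
    rfl
  simp_rw [← hk_left, ← hk_right]
  exact lintegral_lintegral_swap hk.aemeasurable

end Tail

section Holder

variable {ρ : Measure X} {p q : ℝ}

lemma rpow_lintegral_le_lintegral_rpow_mul (hpq : p.HolderConjugate q) {f u : X → ℝ≥0∞}
    (hf : Measurable f) (hu : Measurable u) (hu₀ : ∀ᵐ x ∂ρ, u x ≠ 0) (hu_top : ∀ᵐ x ∂ρ, u x ≠ ⊤) :
    (∫⁻ x, f x ∂ρ) ^ p ≤ (∫⁻ x, u x ^ (-(q / p)) ∂ρ) ^ (p - 1) * ∫⁻ x, f x ^ p * u x ∂ρ := by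
  have hp := hpq.pos
  have hsplit : ∫⁻ x, f x ∂ρ =
      ∫⁻ x, ((fun x ↦ u x ^ (-(1 / p))) * fun x ↦ f x * u x ^ (1 / p)) x ∂ρ := by
    refine lintegral_congr_ae ?_
    filter_upwards [hu₀, hu_top] with x hx₀ hx_top
    rw [Pi.mul_apply, mul_left_comm, ← ENNReal.rpow_add _ _ hx₀ hx_top, neg_add_cancel,
      ENNReal.rpow_zero, mul_one]
  have hdual (x : X) : (u x ^ (-(1 / p))) ^ q = u x ^ (-(q / p)) := by
    rw [← ENNReal.rpow_mul]; congr 1; ring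
  have hprimal (x : X) : (f x * u x ^ (1 / p)) ^ p = f x ^ p * u x := by
    rw [ENNReal.mul_rpow_of_nonneg _ _ hp.le, ← ENNReal.rpow_mul, one_div_mul_cancel hp.ne',
      ENNReal.rpow_one]
  have hHolder := ENNReal.lintegral_mul_le_Lp_mul_Lq ρ hpq.symm
    (f := fun x ↦ u x ^ (-(1 / p))) (g := fun x ↦ f x * u x ^ (1 / p)) (by fun_prop) (by fun_prop)
  simp_rw [← hsplit, hdual, hprimal] at hHolder
  refine (ENNReal.rpow_le_rpow hHolder hp.le).trans_eq ?_
  rw [ENNReal.mul_rpow_of_nonneg _ _ hp.le, ← ENNReal.rpow_mul, ← ENNReal.rpow_mul,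
    one_div_mul_cancel hp.ne', ENNReal.rpow_one, one_div_mul_eq_div, hpq.div_conj_eq_sub_one]

end Holder

/-- `C` is a constant in the Hardy inequality for the operator `f ↦ (s ↦ ∫_{N > s} f dρ)`
from `L^p(ν)` to `L^p(μ)`. -/
def IsHardyConstant (ρ ν : Measure X) (μ : Measure ℝ) (N : X → ℝ) (p : ℝ) (C : ℝ≥0∞) : Prop :=
  ∀ f : X → ℝ≥0∞, Measurable f →
    ∫⁻ s, (∫⁻ x in N ⁻¹' Ioi s, f x ∂ρ) ^ p ∂μ ≤ C ^ p * ∫⁻ x, f x ^ p ∂ν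

/-- The Muckenhoupt constant `B`, which is comparable to the best Hardy constant. -/
noncomputable def muckenhouptConst (ρ : Measure X) (μ : Measure ℝ) (N : X → ℝ) (ψ : X → ℝ≥0)
    (p q : ℝ) : ℝ≥0∞ :=
  ⨆ s, μ (Iic s) ^ (1 / p) * (∫⁻ x in N ⁻¹' Ioi s, dualWeight ψ p q x ∂ρ) ^ (1 / q)

section Necessity

variable {N : X → ℝ} {ρ ν σ : Measure X} {μ : Measure ℝ} {ψ : X → ℝ≥0} {p q : ℝ} {C : ℝ≥0∞}

-- Discarding a `ρ`-null set carrying `σ` from the support of `f` leaves the left side unchanged.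
lemma isHardyConstant_add_iff_of_mutuallySingular (hp : 0 < p) (hσ : σ ⟂ₘ ρ) :
    IsHardyConstant ρ (ν + σ) μ N p C ↔ IsHardyConstant ρ ν μ N p C := by
  refine ⟨fun hC f hf ↦ ?_, fun hC f hf ↦ (hC f hf).trans ?_⟩
  · obtain ⟨E, hE, hσE, hρE⟩ := hσ
    have hρ_ae : E.indicator f =ᵐ[ρ] f := by
      filter_upwards [show ∀ᵐ x ∂ρ, x ∈ E from hρE] with x hx using indicator_of_mem hx f
    have hσ_ae : (fun x ↦ E.indicator f x ^ p) =ᵐ[σ] 0 := by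
      filter_upwards [measure_eq_zero_iff_ae_notMem.1 hσE] with x hx
      simp [hx, hp]
    calc ∫⁻ s, (∫⁻ x in N ⁻¹' Ioi s, f x ∂ρ) ^ p ∂μ
        = ∫⁻ s, (∫⁻ x in N ⁻¹' Ioi s, E.indicator f x ∂ρ) ^ p ∂μ := by
          simp_rw [lintegral_congr_ae (ae_restrict_of_ae hρ_ae)]
      _ ≤ C ^ p * ∫⁻ x, E.indicator f x ^ p ∂(ν + σ) := hC _ (hf.indicator hE)
      _ = C ^ p * ∫⁻ x, E.indicator f x ^ p ∂ν := by
          rw [lintegral_add_measure, lintegral_congr_ae hσ_ae, lintegral_zero_fun, add_zero]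
      _ ≤ C ^ p * ∫⁻ x, f x ^ p ∂ν := by
          gcongr with x
          exact indicator_le_self _ _ x
  · gcongr
    exact Measure.le_add_right le_rfl

namespace IsHardyConstant

lemma measure_Iic_mul_rpow_lintegral_le (hpq : p.HolderConjugate q) (hN : Measurable N)
    (hψ : Measurable ψ) (hC : IsHardyConstant ρ (ρ.withDensity fun x ↦ ψ x) μ N p C) {s : ℝ}
    {h : X → ℝ≥0∞} (hh : Measurable h) (hle : ∀ x, h x ≤ dualWeight ψ p q x)
    (hh_top : ∫⁻ x in N ⁻¹' Ioi s, h x ∂ρ ≠ ⊤) :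
    μ (Iic s) * (∫⁻ x in N ⁻¹' Ioi s, h x ∂ρ) ^ (p - 1) ≤ C ^ p := by
  set H := ∫⁻ x in N ⁻¹' Ioi s, h x ∂ρ with hH
  rcases eq_or_ne H 0 with hH₀ | hH₀
  · simp [hH₀, hpq.sub_one_pos]
  have hmeas : MeasurableSet (N ⁻¹' Ioi s) := hN measurableSet_Ioi
  set f := (N ⁻¹' Ioi s).indicator h
  have hf : Measurable f := hh.indicator hmeas
  have htail (r : ℝ) (hr : r ∈ Iic s) : H ≤ ∫⁻ x in N ⁻¹' Ioi r, f x ∂ρ := by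
    rw [hH, setLIntegral_indicator hmeas,
      inter_eq_left.2 (preimage_mono (Ioi_subset_Ioi hr))]
  have hlower : μ (Iic s) * H ^ p ≤ ∫⁻ r, (∫⁻ x in N ⁻¹' Ioi r, f x ∂ρ) ^ p ∂μ := by
    rw [mul_comm, ← setLIntegral_const]
    refine (setLIntegral_mono' measurableSet_Iic fun r hr ↦ ?_).trans
      (setLIntegral_le_lintegral _ _)
    exact ENNReal.rpow_le_rpow (htail r hr) hpq.nonneg
  have hupper : ∫⁻ x, f x ^ p ∂ρ.withDensity (fun x ↦ ψ x) ≤ H := by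
    rw [lintegral_withDensity_eq_lintegral_mul _ (by fun_prop) (by fun_prop), hH,
      ← lintegral_indicator hmeas]
    exact lintegral_mono fun x ↦
      mul_rpow_le_self_of_le_dualWeight hpq ((indicator_le_self _ _ x).trans (hle x))
  refine (ENNReal.mul_le_mul_iff_left hH₀ hh_top).1 ?_
  calc μ (Iic s) * H ^ (p - 1) * H = μ (Iic s) * H ^ p := by
        rw [rpow_eq_self_mul_rpow_sub_one hpq.lt.le, mul_comm H, mul_assoc]
    _ ≤ C ^ p * ∫⁻ x, f x ^ p ∂ρ.withDensity (fun x ↦ ψ x) := hlower.trans (hC f hf)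
    _ ≤ C ^ p * H := by gcongr

lemma muckenhouptConst_le [SigmaFinite ρ] (hpq : p.HolderConjugate q) (hN : Measurable N)
    (hψ : Measurable ψ) (hC : IsHardyConstant ρ (ρ.withDensity fun x ↦ ψ x) μ N p C) :
    muckenhouptConst ρ μ N ψ p q ≤ C := by
  refine iSup_le fun s ↦ mul_rpow_le_of_forall_lt hpq.symm.one_div_pos fun L hL ↦ ?_
  obtain ⟨h, hh, hle, hLh, hh_top⟩ := exists_measurable_le_lt_lintegral_lt_top hL
  have hexp : 1 / q = (p - 1) * (1 / p) := by
    rw [← hpq.div_conj_eq_sub_one]; field_simp [hpq.ne_zero]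
  calc μ (Iic s) ^ (1 / p) * L ^ (1 / q)
      ≤ μ (Iic s) ^ (1 / p) * (∫⁻ x in N ⁻¹' Ioi s, h x ∂ρ) ^ (1 / q) := by
        gcongr; exact hpq.symm.one_div_nonneg
    _ = (μ (Iic s) * (∫⁻ x in N ⁻¹' Ioi s, h x ∂ρ) ^ (p - 1)) ^ (1 / p) := by
        rw [ENNReal.mul_rpow_of_nonneg _ _ hpq.one_div_nonneg, ← ENNReal.rpow_mul, ← hexp]
    _ ≤ (C ^ p) ^ (1 / p) := ENNReal.rpow_le_rpow
        (measure_Iic_mul_rpow_lintegral_le hpq hN hψ hC hh hle hh_top.ne) hpq.one_div_nonneg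
    _ = C := by rw [one_div, ENNReal.rpow_rpow_inv hpq.ne_zero]

end IsHardyConstant

end Necessity

section Sufficiency

variable {N : X → ℝ} {ρ : Measure X} {μ : Measure ℝ} {ψ : X → ℝ≥0} {p q : ℝ} {B : ℝ≥0∞}

/-- The integral of the dual weight over `{N ≥ N x}`, whose power `1 / q` is the auxiliary weight in
the application of Hölder's inequality. The tail is closed so that atoms of `N` are counted. -/
noncomputable def dualTail (ρ : Measure X) (N : X → ℝ) (ψ : X → ℝ≥0) (p q : ℝ) (x : X) : ℝ≥0∞ :=
  ∫⁻ y in N ⁻¹' Ici (N x), dualWeight ψ p q y ∂ρ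

lemma measurable_dualTail (hN : Measurable N) : Measurable (dualTail ρ N ψ p q) :=
  measurable_lintegral_preimage_Ici hN ρ _

lemma ae_dualTail_rpow_ne_top (hpq : p.HolderConjugate q) (hN : Measurable N) {s : ℝ}
    (hs : ∫⁻ x in N ⁻¹' Ioi s, dualWeight ψ p q x ∂ρ ≠ ⊤) :
    ∀ᵐ x ∂ρ.restrict (N ⁻¹' Ioi s), dualTail ρ N ψ p q x ^ (1 / q) ≠ ⊤ := by
  filter_upwards [ae_restrict_mem (hN measurableSet_Ioi)] with x hx
  refine ENNReal.rpow_ne_top_of_nonneg hpq.symm.one_div_nonneg (ne_top_of_le_ne_top hs ?_)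
  exact lintegral_mono_set (preimage_mono (Ici_subset_Ioi.2 hx))

lemma ae_mul_dualTail_rpow_ne_zero (hpq : p.HolderConjugate q) (hN : Measurable N)
    (hψ : Measurable ψ) {s : ℝ} (hs : ∫⁻ x in N ⁻¹' Ioi s, dualWeight ψ p q x ∂ρ ≠ ⊤) :
    ∀ᵐ x ∂ρ.restrict (N ⁻¹' Ioi s), ψ x * dualTail ρ N ψ p q x ^ (1 / q) ≠ 0 := by
  have hw : Measurable (dualWeight ψ p q) := measurable_dualWeight hψ
  filter_upwards [ae_lt_top hw hs,
    ae_lintegral_preimage_Ici_ne_zero hN hw (dualWeight_ne_zero hpq) hs] with x hwx hVx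
  refine mul_ne_zero (fun hψx ↦ ?_) ?_
  · exact hwx.ne (dualWeight_eq_top hpq (by exact_mod_cast hψx))
  · rwa [Ne, ENNReal.rpow_eq_zero_iff_of_pos hpq.symm.one_div_pos]

lemma lintegral_mul_dualTail_rpow_le (hpq : p.HolderConjugate q) (hN : Measurable N)
    (hψ : Measurable ψ) {s : ℝ} (hs : ∫⁻ x in N ⁻¹' Ioi s, dualWeight ψ p q x ∂ρ ≠ ⊤) :
    ∫⁻ x in N ⁻¹' Ioi s, (ψ x * dualTail ρ N ψ p q x ^ (1 / q)) ^ (-(q / p)) ∂ρ ≤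
      ENNReal.ofReal q * (∫⁻ x in N ⁻¹' Ioi s, dualWeight ψ p q x ∂ρ) ^ (1 / q) := by
  have hone : 1 - 1 / p = 1 / q := by rw [one_div, one_div, hpq.one_sub_inv]
  have hinv : (1 - 1 / p)⁻¹ = q := by rw [hone, one_div, inv_inv]
  have hself := lintegral_mul_lintegral_preimage_Ici_rpow_neg_le hN ρ
    (measurable_dualWeight (p := p) (q := q) hψ) s hpq.one_div_pos ((div_lt_one hpq.pos).2 hpq.lt)
  rw [hinv, hone] at hself
  refine (lintegral_congr_ae ?_).trans_le hself
  filter_upwards [ae_dualTail_rpow_ne_top hpq hN hs] with x hx_top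
  rw [ENNReal.mul_rpow_of_ne_top coe_ne_top hx_top, ← ENNReal.rpow_mul, dualWeight, dualTail]
  congr 2
  field_simp [hpq.symm.ne_zero]

lemma rpow_setLIntegral_le_mul_dualTail (hpq : p.HolderConjugate q) (hN : Measurable N)
    (hψ : Measurable ψ) {f : X → ℝ≥0∞} (hf : Measurable f) {s : ℝ}
    (hs : ∫⁻ x in N ⁻¹' Ioi s, dualWeight ψ p q x ∂ρ ≠ ⊤) :
    (∫⁻ x in N ⁻¹' Ioi s, f x ∂ρ) ^ p ≤
      (ENNReal.ofReal q * (∫⁻ x in N ⁻¹' Ioi s, dualWeight ψ p q x ∂ρ) ^ (1 / q)) ^ (p - 1) *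
        ∫⁻ x in N ⁻¹' Ioi s, f x ^ p * (ψ x * dualTail ρ N ψ p q x ^ (1 / q)) ∂ρ := by
  have hV : Measurable (dualTail ρ N ψ p q) := measurable_dualTail hN
  have hu_top : ∀ᵐ x ∂ρ.restrict (N ⁻¹' Ioi s), ψ x * dualTail ρ N ψ p q x ^ (1 / q) ≠ ⊤ := by
    filter_upwards [ae_dualTail_rpow_ne_top hpq hN hs] with x hx
    exact ENNReal.mul_ne_top coe_ne_top hx
  refine (rpow_lintegral_le_lintegral_rpow_mul hpq hf (by fun_prop)
    (ae_mul_dualTail_rpow_ne_zero hpq hN hψ hs) hu_top).trans ?_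
  gcongr
  · exact hpq.sub_one_pos.le
  · exact lintegral_mul_dualTail_rpow_le hpq hN hψ hs

lemma measure_Iio_rpow_mul_lintegral_Ici_rpow_le (hpq : p.HolderConjugate q) {w : X → ℝ≥0∞}
    (hB : ∀ s, μ (Iic s) ^ (1 / p) * (∫⁻ x in N ⁻¹' Ioi s, w x ∂ρ) ^ (1 / q) ≤ B) (t : ℝ) :
    μ (Iio t) ^ (1 / p) * (∫⁻ x in N ⁻¹' Ici t, w x ∂ρ) ^ (1 / q) ≤ B := by
  rw [mul_comm]
  refine mul_rpow_le_of_forall_lt hpq.one_div_pos fun L hL ↦ ?_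
  obtain ⟨u, hu_mono, hu_lt, hu_tendsto⟩ := exists_seq_strictMono_tendsto t
  have hmono : Monotone fun n ↦ Iic (u n) := fun _ _ hmn ↦ Iic_subset_Iic.2 (hu_mono.monotone hmn)
  rw [← iUnion_Iic_eq_Iio_of_lt_of_tendsto hu_lt hu_tendsto, hmono.measure_iUnion,
    lt_iSup_iff] at hL
  obtain ⟨n, hn⟩ := hL
  rw [mul_comm]
  refine le_trans ?_ (hB (u n))
  gcongr
  · exact hpq.one_div_nonneg
  · exact hpq.symm.one_div_nonneg
  · exact hu_lt n

lemma rpow_setLIntegral_le_measure_Iic_rpow_mul (hpq : p.HolderConjugate q) (hN : Measurable N)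
    (hψ : Measurable ψ) (hB_top : B ≠ ⊤) {s : ℝ} (hμ₀ : μ (Iic s) ≠ 0) (hμ_top : μ (Iic s) ≠ ⊤)
    (hB : μ (Iic s) ^ (1 / p) * (∫⁻ x in N ⁻¹' Ioi s, dualWeight ψ p q x ∂ρ) ^ (1 / q) ≤ B)
    {f : X → ℝ≥0∞} (hf : Measurable f) :
    (∫⁻ x in N ⁻¹' Ioi s, f x ∂ρ) ^ p ≤ (ENNReal.ofReal q * B) ^ (p - 1) *
      (μ (Iic s) ^ (-(1 / q)) *
        ∫⁻ x in N ⁻¹' Ioi s, f x ^ p * (ψ x * dualTail ρ N ψ p q x ^ (1 / q)) ∂ρ) := by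
  have hp₁ : 0 ≤ p - 1 := hpq.sub_one_pos.le
  have hM₀ : μ (Iic s) ^ (1 / p) ≠ 0 := by
    rwa [Ne, ENNReal.rpow_eq_zero_iff_of_pos hpq.one_div_pos]
  have hM_top : μ (Iic s) ^ (1 / p) ≠ ⊤ := ENNReal.rpow_ne_top_of_nonneg hpq.one_div_nonneg hμ_top
  have hW : (∫⁻ x in N ⁻¹' Ioi s, dualWeight ψ p q x ∂ρ) ^ (1 / q) ≤
      B * μ (Iic s) ^ (-(1 / p)) := by
    rwa [ENNReal.rpow_neg, ← div_eq_mul_inv, ENNReal.le_div_iff_mul_le (.inl hM₀) (.inl hM_top),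
      mul_comm]
  have hW_top : ∫⁻ x in N ⁻¹' Ioi s, dualWeight ψ p q x ∂ρ ≠ ⊤ := fun htop ↦ by
    rw [htop, ENNReal.top_rpow_of_pos hpq.symm.one_div_pos, ENNReal.mul_top hM₀] at hB
    exact hB_top (top_le_iff.1 hB)
  have hexp : -(1 / p) * (p - 1) = -(1 / q) := by
    rw [← hpq.div_conj_eq_sub_one]; field_simp [hpq.ne_zero]
  refine (rpow_setLIntegral_le_mul_dualTail hpq hN hψ hf hW_top).trans ?_
  rw [← mul_assoc]
  gcongr
  calc (ENNReal.ofReal q * (∫⁻ x in N ⁻¹' Ioi s, dualWeight ψ p q x ∂ρ) ^ (1 / q)) ^ (p - 1)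
      ≤ (ENNReal.ofReal q * B * μ (Iic s) ^ (-(1 / p))) ^ (p - 1) := by
        rw [mul_assoc]; gcongr
    _ = (ENNReal.ofReal q * B) ^ (p - 1) * μ (Iic s) ^ (-(1 / q)) := by
        rw [ENNReal.mul_rpow_of_nonneg _ _ hp₁, ← ENNReal.rpow_mul, hexp]

lemma ofReal_mul_rpow_mul_eq_rpow (hpq : p.HolderConjugate q) (B : ℝ≥0∞) :
    (ENNReal.ofReal q * B) ^ (p - 1) * (ENNReal.ofReal p * B) =
      (ENNReal.ofReal (q ^ (1 / q) * p ^ (1 / p)) * B) ^ p := by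
  have hp := hpq.pos
  have hq := hpq.symm.pos
  have hp₁ := hpq.sub_one_pos.le
  have hconst : (q ^ (1 / q) * p ^ (1 / p)) ^ p = q ^ (p - 1) * p := by
    rw [Real.mul_rpow (by positivity) (by positivity), ← Real.rpow_mul hq.le,
      ← Real.rpow_mul hp.le, one_div_mul_cancel hp.ne', Real.rpow_one, one_div_mul_eq_div,
      hpq.div_conj_eq_sub_one]
  rw [ENNReal.mul_rpow_of_nonneg _ _ hp.le, ENNReal.ofReal_rpow_of_nonneg (by positivity) hp.le,
    hconst, ENNReal.ofReal_mul (by positivity), ← ENNReal.ofReal_rpow_of_nonneg hq.le hp₁,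
    ENNReal.mul_rpow_of_nonneg _ _ hp₁, rpow_eq_self_mul_rpow_sub_one hpq.lt.le B]
  ring

lemma dualTail_rpow_mul_lintegral_measure_Iic_rpow_neg_le (hpq : p.HolderConjugate q)
    (hB : muckenhouptConst ρ μ N ψ p q ≤ B) (x : X) :
    dualTail ρ N ψ p q x ^ (1 / q) * ∫⁻ s in Iio (N x), μ (Iic s) ^ (-(1 / q)) ∂μ ≤
      ENNReal.ofReal p * B := by
  have hone : 1 - 1 / q = 1 / p := by rw [one_div, one_div, hpq.symm.one_sub_inv]
  have hinv : (1 - 1 / q)⁻¹ = p := by rw [hone, one_div, inv_inv]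
  have hself := lintegral_Iio_measure_Iic_rpow_neg_le μ (N x) hpq.symm.one_div_pos
    ((div_lt_one hpq.symm.pos).2 hpq.symm.lt)
  rw [hinv, hone] at hself
  calc dualTail ρ N ψ p q x ^ (1 / q) * ∫⁻ s in Iio (N x), μ (Iic s) ^ (-(1 / q)) ∂μ
      ≤ dualTail ρ N ψ p q x ^ (1 / q) * (ENNReal.ofReal p * μ (Iio (N x)) ^ (1 / p)) := by
        gcongr
    _ = ENNReal.ofReal p * (μ (Iio (N x)) ^ (1 / p) * dualTail ρ N ψ p q x ^ (1 / q)) := by ring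
    _ ≤ ENNReal.ofReal p * B := by
        gcongr
        exact measure_Iio_rpow_mul_lintegral_Ici_rpow_le hpq (iSup_le_iff.1 hB) (N x)

lemma isHardyConstant_of_isFiniteMeasure [IsFiniteMeasure μ] [SFinite ρ]
    (hpq : p.HolderConjugate q) (hN : Measurable N) (hψ : Measurable ψ) (hB_top : B ≠ ⊤)
    (hB : muckenhouptConst ρ μ N ψ p q ≤ B) :
    IsHardyConstant ρ (ρ.withDensity fun x ↦ ψ x) μ N p
      (ENNReal.ofReal (q ^ (1 / q) * p ^ (1 / p)) * B) := by
  intro f hf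
  set V := dualTail ρ N ψ p q
  have hV : Measurable V := measurable_dualTail hN
  have hM : Measurable fun s ↦ μ (Iic s) := measurable_measure_preimage_Iic measurable_id μ
  set D := (ENNReal.ofReal q * B) ^ (p - 1)
  have hD : D ≠ ⊤ :=
    ENNReal.rpow_ne_top_of_nonneg hpq.sub_one_pos.le (mul_ne_top ofReal_ne_top hB_top)
  have hpointwise : ∀ᵐ s ∂μ, (∫⁻ x in N ⁻¹' Ioi s, f x ∂ρ) ^ p ≤
      D * (μ (Iic s) ^ (-(1 / q)) * ∫⁻ x in N ⁻¹' Ioi s, f x ^ p * (ψ x * V x ^ (1 / q)) ∂ρ) := by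
    filter_upwards [ae_measure_preimage_Iic_ne_zero measurable_id μ] with s hs
    exact rpow_setLIntegral_le_measure_Iic_rpow_mul hpq hN hψ hB_top hs (measure_ne_top μ _)
      (iSup_le_iff.1 hB s) hf
  have hinner (x : X) : f x ^ p * (ψ x * V x ^ (1 / q)) *
      ∫⁻ s in Iio (N x), μ (Iic s) ^ (-(1 / q)) ∂μ ≤ ENNReal.ofReal p * B * (ψ x * f x ^ p) := by
    rw [← mul_assoc, mul_assoc, mul_comm, mul_comm (ψ x : ℝ≥0∞)]
    exact mul_le_mul_left (dualTail_rpow_mul_lintegral_measure_Iic_rpow_neg_le hpq hB x) _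
  calc ∫⁻ s, (∫⁻ x in N ⁻¹' Ioi s, f x ∂ρ) ^ p ∂μ
      ≤ D * ∫⁻ s, μ (Iic s) ^ (-(1 / q)) *
          ∫⁻ x in N ⁻¹' Ioi s, f x ^ p * (ψ x * V x ^ (1 / q)) ∂ρ ∂μ :=
        (lintegral_mono_ae hpointwise).trans_eq (lintegral_const_mul' _ _ hD)
    _ = D * ∫⁻ x, f x ^ p * (ψ x * V x ^ (1 / q)) *
          ∫⁻ s in Iio (N x), μ (Iic s) ^ (-(1 / q)) ∂μ ∂ρ := by
        rw [lintegral_mul_setLIntegral_preimage_Ioi hN (hM.pow_const _) (by fun_prop)]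
    _ ≤ D * ∫⁻ x, ENNReal.ofReal p * B * (ψ x * f x ^ p) ∂ρ :=
        mul_le_mul_right (lintegral_mono hinner) D
    _ = D * (ENNReal.ofReal p * B) * ∫⁻ x, f x ^ p ∂ρ.withDensity (fun x ↦ ψ x) := by
        rw [lintegral_const_mul _ (by fun_prop), ← mul_assoc,
          lintegral_withDensity_eq_lintegral_mul _ (by fun_prop) (by fun_prop)]
        rfl
    _ = (ENNReal.ofReal (q ^ (1 / q) * p ^ (1 / p)) * B) ^ p *
          ∫⁻ x, f x ^ p ∂ρ.withDensity (fun x ↦ ψ x) := by rw [ofReal_mul_rpow_mul_eq_rpow hpq]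

-- Only the levels `s` with `ρ {N > s} ≠ 0` contribute, and `μ (Iic s)` is finite for those.
lemma lintegral_rpow_setLIntegral_eq_iSup (hp : 0 < p) (f : X → ℝ≥0∞) :
    ∫⁻ s, (∫⁻ x in N ⁻¹' Ioi s, f x ∂ρ) ^ p ∂μ =
      ⨆ r : {r : ℚ // ρ (N ⁻¹' Ioi (r : ℝ)) ≠ 0},
        ∫⁻ s in Iic (r : ℝ), (∫⁻ x in N ⁻¹' Ioi s, f x ∂ρ) ^ p ∂μ := by
  have hnull (s : ℝ) (hs : s ∉ ⋃ r : {r : ℚ // ρ (N ⁻¹' Ioi (r : ℝ)) ≠ 0}, Iic (r : ℝ)) :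
      ρ (N ⁻¹' Ioi s) = 0 := by
    have hcover : N ⁻¹' Ioi s ⊆ ⋃ r : {r : ℚ // s < r}, N ⁻¹' Ioi (r : ℝ) := fun x hx ↦ by
      obtain ⟨r, hsr, hrx⟩ := exists_rat_btwn (show s < N x from hx)
      exact mem_iUnion.2 ⟨⟨r, hsr⟩, hrx⟩
    refine measure_mono_null hcover (measure_iUnion_null fun r ↦ ?_)
    by_contra hr
    exact hs (mem_iUnion.2 ⟨⟨r, hr⟩, r.2.le⟩)
  have hdirected : Directed (· ⊆ ·)
      fun r : {r : ℚ // ρ (N ⁻¹' Ioi (r : ℝ)) ≠ 0} ↦ Iic (r : ℝ) :=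
    Monotone.directed_le fun r r' hrr' ↦ Iic_subset_Iic.2 (by exact_mod_cast hrr')
  rw [← setLIntegral_iUnion_of_directed _ hdirected]
  refine (setLIntegral_eq_of_support_subset fun s hs ↦ ?_).symm
  by_contra hs'
  exact hs (by simp [setLIntegral_measure_zero _ _ (hnull s hs'), hp])

lemma measure_Iic_ne_top_of_muckenhouptConst_ne_top (hpq : p.HolderConjugate q)
    (hψ : Measurable ψ) (hB : muckenhouptConst ρ μ N ψ p q ≠ ⊤) {s : ℝ}
    (hs : ρ (N ⁻¹' Ioi s) ≠ 0) : μ (Iic s) ≠ ⊤ := fun htop ↦ by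
  have hW : (∫⁻ x in N ⁻¹' Ioi s, dualWeight ψ p q x ∂ρ) ^ (1 / q) ≠ 0 := by
    rw [Ne, ENNReal.rpow_eq_zero_iff_of_pos hpq.symm.one_div_pos,
      lintegral_eq_zero_iff (measurable_dualWeight hψ)]
    intro hw
    have hbot : ∀ᵐ _ ∂ρ.restrict (N ⁻¹' Ioi s), False := by
      filter_upwards [hw] with x using dualWeight_ne_zero hpq x
    rw [Filter.eventually_false_iff_eq_bot, ae_eq_bot, Measure.restrict_eq_zero] at hbot
    exact hs hbot
  refine hB (top_le_iff.1 ?_)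
  calc ⊤ = μ (Iic s) ^ (1 / p) * (∫⁻ x in N ⁻¹' Ioi s, dualWeight ψ p q x ∂ρ) ^ (1 / q) := by
        rw [htop, ENNReal.top_rpow_of_pos hpq.one_div_pos, ENNReal.top_mul hW]
    _ ≤ muckenhouptConst ρ μ N ψ p q :=
        le_iSup (fun s ↦ μ (Iic s) ^ (1 / p) *
          (∫⁻ x in N ⁻¹' Ioi s, dualWeight ψ p q x ∂ρ) ^ (1 / q)) s

lemma muckenhouptConst_mono {μ' : Measure ℝ} (hp : 0 ≤ p) (hμ : μ' ≤ μ) :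
    muckenhouptConst ρ μ' N ψ p q ≤ muckenhouptConst ρ μ N ψ p q := by
  refine iSup_mono fun s ↦ ?_
  gcongr

lemma isHardyConstant_of_muckenhouptConst_ne_top [SFinite ρ] (hpq : p.HolderConjugate q)
    (hN : Measurable N) (hψ : Measurable ψ) (hB : muckenhouptConst ρ μ N ψ p q ≠ ⊤) :
    IsHardyConstant ρ (ρ.withDensity fun x ↦ ψ x) μ N p
      (ENNReal.ofReal (q ^ (1 / q) * p ^ (1 / p)) * muckenhouptConst ρ μ N ψ p q) := by
  intro f hf
  rw [lintegral_rpow_setLIntegral_eq_iSup hpq.pos]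
  refine iSup_le fun ⟨r, hr⟩ ↦ ?_
  have : IsFiniteMeasure (μ.restrict (Iic (r : ℝ))) :=
    isFiniteMeasure_restrict.2 (measure_Iic_ne_top_of_muckenhouptConst_ne_top hpq hψ hB hr)
  exact isHardyConstant_of_isFiniteMeasure hpq hN hψ hB
    (muckenhouptConst_mono hpq.nonneg Measure.restrict_le_self) f hf

end Sufficiency

theorem conjugate_hardy_inequality_general {ρ ν σ : Measure X} [SigmaFinite ρ] {μ : Measure ℝ}
    {N : X → ℝ} (hN : Measurable N) {ψ : X → ℝ≥0} (hψ : Measurable ψ) (hσ : σ ⟂ₘ ρ)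
    (hdec : ν = ρ.withDensity (fun x ↦ (ψ x : ℝ≥0∞)) + σ) {p q : ℝ} (hpq : p.HolderConjugate q) :
    ((∃ C, C ≠ ⊤ ∧ IsHardyConstant ρ ν μ N p C) ↔ muckenhouptConst ρ μ N ψ p q ≠ ⊤) ∧
    (∀ C, IsHardyConstant ρ ν μ N p C → muckenhouptConst ρ μ N ψ p q ≤ C) ∧
    (muckenhouptConst ρ μ N ψ p q ≠ ⊤ → IsHardyConstant ρ ν μ N p
      (ENNReal.ofReal (q ^ (1 / q) * p ^ (1 / p)) * muckenhouptConst ρ μ N ψ p q)) := by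
  simp only [hdec, isHardyConstant_add_iff_of_mutuallySingular hpq.pos hσ]
  have hlower (C : ℝ≥0∞) (hC : IsHardyConstant ρ (ρ.withDensity fun x ↦ ψ x) μ N p C) :
      muckenhouptConst ρ μ N ψ p q ≤ C := hC.muckenhouptConst_le hpq hN hψ
  have hupper := isHardyConstant_of_muckenhouptConst_ne_top (ρ := ρ) (μ := μ) hpq hN hψ
  refine ⟨⟨fun ⟨C, hC_top, hC⟩ ↦ ne_top_of_le_ne_top hC_top (hlower C hC), fun hB ↦ ?_⟩,
    hlower, hupper⟩
  exact ⟨_, mul_ne_top ofReal_ne_top hB, hupper hB⟩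

section HalfLine

variable {ρ ν μ : Measure ℝ} {p q : ℝ} {a : ℝ}

lemma isHardyConstant_restrict_Ioi_iff {C : ℝ≥0∞} :
    IsHardyConstant (ρ.restrict (Ioi a)) ν (μ.restrict (Ioi a)) id p C ↔
      ∀ f : ℝ → ℝ≥0∞, Measurable f →
        ∫⁻ s in Ioi a, (∫⁻ t in Ioi s, f t ∂ρ) ^ p ∂μ ≤ C ^ p * ∫⁻ x, f x ^ p ∂ν := by
  have hinner (f : ℝ → ℝ≥0∞) :
      ∫⁻ s in Ioi a, (∫⁻ t in id ⁻¹' Ioi s, f t ∂ρ.restrict (Ioi a)) ^ p ∂μ =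
        ∫⁻ s in Ioi a, (∫⁻ t in Ioi s, f t ∂ρ) ^ p ∂μ := by
    refine setLIntegral_congr_fun measurableSet_Ioi fun s hs ↦ ?_
    rw [preimage_id, Measure.restrict_restrict_of_subset (Ioi_subset_Ioi (le_of_lt hs))]
  simp only [IsHardyConstant, hinner]

lemma muckenhouptConst_restrict_Ioi {ψ : ℝ → ℝ≥0} (hp : 0 < p) :
    muckenhouptConst (ρ.restrict (Ioi a)) (μ.restrict (Ioi a)) id ψ p q =
      ⨆ s ∈ Ioi a, μ (Ioc a s) ^ (1 / p) *
        (∫⁻ x in Ioi s, (ψ x : ℝ≥0∞) ^ (-(q / p)) ∂ρ) ^ (1 / q) := by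
  refine iSup_congr fun s ↦ ?_
  rw [Measure.restrict_apply measurableSet_Iic, inter_comm, Ioi_inter_Iic]
  by_cases hs : s ∈ Ioi a
  · rw [iSup_pos hs, preimage_id,
      Measure.restrict_restrict_of_subset (Ioi_subset_Ioi (le_of_lt hs))]
    rfl
  · rw [iSup_neg hs, Ioc_eq_empty hs, measure_empty,
      ENNReal.zero_rpow_of_pos (one_div_pos.2 hp), zero_mul, bot_eq_zero]

end HalfLine

/-- The conjugate (dual) Hardy inequality on `(0,+∞)`: there is a finite constant `C` such
that `∫ (∫_{(s,∞)} f dt)^p dμ(s) ≤ C^p ∫ f^p dν` for all nonnegative Borel `f` iff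
`B := sup_{s>0} μ((0,s])^{1/p} (∫_{(s,∞)} ψ^{-p'/p} dx)^{1/p'}` is finite; moreover every
admissible `C` satisfies `B ≤ C`, and `(p')^{1/p'} p^{1/p} B` is admissible. -/
theorem conjugate_hardy_inequality
    (μ ν : Measure ℝ) [SigmaFinite ν]
    (hμ0 : μ (Set.Iic 0) = 0) (hν0 : ν (Set.Iic 0) = 0)
    (ψ : ℝ → ℝ≥0) (hψ : Measurable ψ)
    (σ : Measure ℝ) (hσ : σ.MutuallySingular (volume.restrict (Set.Ioi 0)))
    (hdec : ν = (volume.restrict (Set.Ioi 0)).withDensity (fun x => (ψ x : ℝ≥0∞)) + σ)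
    (p p' : ℝ) (hp : 1 < p) (hp' : p' = p / (p - 1))
    (B : ℝ≥0∞)
    (hB : B = ⨆ s ∈ Set.Ioi (0 : ℝ), μ (Set.Ioc 0 s) ^ (1 / p) *
      (∫⁻ x in Set.Ioi s, ((ψ x : ℝ≥0∞)) ^ (-(p' / p))) ^ (1 / p')) :
    ((∃ C : ℝ≥0∞, C ≠ ⊤ ∧ ∀ f : ℝ → ℝ≥0∞, Measurable f →
        ∫⁻ s in Set.Ioi 0, (∫⁻ t in Set.Ioi s, f t) ^ p ∂μ ≤
          C ^ p * ∫⁻ x in Set.Ioi 0, f x ^ p ∂ν) ↔ B ≠ ⊤) ∧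
    (∀ C : ℝ≥0∞, (∀ f : ℝ → ℝ≥0∞, Measurable f →
        ∫⁻ s in Set.Ioi 0, (∫⁻ t in Set.Ioi s, f t) ^ p ∂μ ≤
          C ^ p * ∫⁻ x in Set.Ioi 0, f x ^ p ∂ν) → B ≤ C) ∧
    (B ≠ ⊤ → ∀ f : ℝ → ℝ≥0∞, Measurable f →
        ∫⁻ s in Set.Ioi 0, (∫⁻ t in Set.Ioi s, f t) ^ p ∂μ ≤
          (ENNReal.ofReal (p' ^ (1 / p') * p ^ (1 / p)) * B) ^ p *
            ∫⁻ x in Set.Ioi 0, f x ^ p ∂ν) := by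
  have hpq : p.HolderConjugate p' := (Real.holderConjugate_iff_eq_conjExponent hp).2 hp'
  have hν : ν.restrict (Ioi 0) = ν :=
    Measure.restrict_eq_self_of_ae_mem (by rwa [ae_iff, ← compl_def, compl_Ioi])
  rw [hν]
  simp only [hB, ← isHardyConstant_restrict_Ioi_iff, ← muckenhouptConst_restrict_Ioi hpq.pos]
  exact conjugate_hardy_inequality_general measurable_id hψ hσ hdec hpq
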